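/- arXiv:2207.05156 — 4 statements merged into one kernel-verified Lean document; each statement's English description precedes it below -/
import Mathlib

section
/- Fix an integer k ≥ 1, a probability mass function π on the nonnegative integers with π_k > 0, and real numbers p_i with 0 < p_i < 1 for all i ≥ k+1. Set s_0(k+1,k+j) = ∏_{i=k+1}^{k+j} (1−p_i) and define, for t ∈ (0,1], S_0(t,k) = (∑_{j≥0} π_{k+j} C(k+j,k) (1−t)^j s_0(k+1,k+j)) / (∑_{j≥0} π_{k+j} C(k+j,k) (1−t)^j), where C(·,·) is the binomial coefficient. Then t ↦ S_0(t,k) is nondecreasing on (0,1], and it is strictly increasing on (0,1] if ∑_{j=k+1}^{∞} π_j > 0. -/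
/-- `s₀(k+1, k+j)`: the probability of zero successes among trials `k+1, …, k+j`. -/
noncomputable def s0 (p : ℕ → ℝ) (k j : ℕ) : ℝ :=
  ∏ i ∈ Finset.Ico (k + 1) (k + j + 1), (1 - p i)

/-- `S₀(t,k)`: the conditional probability of no successes after time `t` given
`k` trials on `[0,t]`, as a normalized power series in `1-t`. -/
noncomputable def S0 (pi : ℕ → ℝ) (p : ℕ → ℝ) (k : ℕ) (t : ℝ) : ℝ :=
  (∑' j : ℕ, pi (k + j) * ((k + j).choose k : ℝ) * (1 - t) ^ j * s0 p k j) /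
    (∑' j : ℕ, pi (k + j) * ((k + j).choose k : ℝ) * (1 - t) ^ j)

lemma aux_pow {x y : ℝ} (hy : 0 ≤ y) (hxy : y ≤ x) {i j : ℕ} (h : i ≤ j) :
    x ^ i * y ^ j ≤ x ^ j * y ^ i := by
  obtain ⟨d, rfl⟩ := Nat.exists_eq_add_of_le h
  have h1 : y ^ d ≤ x ^ d := pow_le_pow_left₀ hy hxy d
  have h2 : 0 ≤ x ^ i * y ^ i := mul_nonneg (pow_nonneg (hy.trans hxy) i) (pow_nonneg hy i)
  have := mul_le_mul_of_nonneg_left h1 h2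
  rw [pow_add, pow_add]
  nlinarith

lemma aux_prod {f g : ℕ → ℝ} (hf : Summable f) (hg : Summable g) :
    HasSum (fun q : ℕ × ℕ => f q.1 * g q.2 + f q.2 * g q.1) (2 * ((∑' j, f j) * (∑' j, g j))) := by
  have hs : Summable fun q : ℕ × ℕ => f q.1 * g q.2 :=
    summable_mul_of_summable_norm hf.norm hg.norm
  have F : HasSum (fun q : ℕ × ℕ => f q.1 * g q.2) ((∑' j, f j) * (∑' j, g j)) :=
    HasSum.mul hf.hasSum hg.hasSum hs
  have F' : HasSum (fun q : ℕ × ℕ => f q.2 * g q.1) ((∑' j, f j) * (∑' j, g j)) :=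
    (Equiv.prodComm ℕ ℕ).hasSum_iff.mpr F
  rw [two_mul]
  exact F.add F'

lemma aux_hasSum {a w : ℕ → ℝ} {x y : ℝ}
    (hx : Summable fun j => a j * x ^ j) (hy : Summable fun j => a j * y ^ j)
    (hxw : Summable fun j => a j * x ^ j * w j) (hyw : Summable fun j => a j * y ^ j * w j) :
    HasSum (fun q : ℕ × ℕ => a q.1 * a q.2 *
        ((x ^ q.1 * y ^ q.2 - x ^ q.2 * y ^ q.1) * (w q.1 - w q.2)))
      (2 * ((∑' j, a j * x ^ j * w j) * (∑' j, a j * y ^ j)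
        - (∑' j, a j * y ^ j * w j) * (∑' j, a j * x ^ j))) := by
  have F := aux_prod hxw hy
  have G := aux_prod hyw hx
  generalize (∑' j, a j * x ^ j * w j) = A at *
  generalize (∑' j, a j * y ^ j * w j) = B at *
  generalize (∑' j, a j * x ^ j) = C at *
  generalize (∑' j, a j * y ^ j) = D at *
  have K := F.sub G
  have e : 2 * (A * D) - 2 * (B * C) = 2 * (A * D - B * C) := by ring
  rw [e] at K
  have hfun : (fun q : ℕ × ℕ => a q.1 * a q.2 *
        ((x ^ q.1 * y ^ q.2 - x ^ q.2 * y ^ q.1) * (w q.1 - w q.2))) =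
      fun b : ℕ × ℕ =>
      a b.1 * x ^ b.1 * w b.1 * (a b.2 * y ^ b.2) + a b.2 * x ^ b.2 * w b.2 * (a b.1 * y ^ b.1) -
        (a b.1 * y ^ b.1 * w b.1 * (a b.2 * x ^ b.2)
          + a b.2 * y ^ b.2 * w b.2 * (a b.1 * x ^ b.1)) := by
    funext q
    ring
  rw [hfun]
  exact K

lemma aux_term {a w : ℕ → ℝ} {x y : ℝ} (ha : ∀ j, 0 ≤ a j) (hw : Antitone w)
    (hy : 0 ≤ y) (hxy : y ≤ x) (q : ℕ × ℕ) : a q.1 * a q.2 *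
        ((x ^ q.1 * y ^ q.2 - x ^ q.2 * y ^ q.1) * (w q.1 - w q.2)) ≤ 0 := by
  refine mul_nonpos_of_nonneg_of_nonpos (mul_nonneg (ha _) (ha _)) ?_
  rcases le_total q.1 q.2 with h | h
  · exact mul_nonpos_of_nonpos_of_nonneg (sub_nonpos.2 (aux_pow hy hxy h)) (sub_nonneg.2 (hw h))
  · exact mul_nonpos_of_nonneg_of_nonpos (sub_nonneg.2 (aux_pow hy hxy h)) (sub_nonpos.2 (hw h))

/-- `t ↦ S₀(t,k)` is nondecreasing on `(0,1]`, and strictly increasing there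
if `∑_{j=k+1}^∞ π_j > 0`. -/
theorem stmt3 (k : ℕ) (hk : 1 ≤ k) (pi : ℕ → ℝ)
    (hpi0 : ∀ n, 0 ≤ pi n) (hpi1 : HasSum pi 1) (hpik : 0 < pi k)
    (p : ℕ → ℝ) (hp : ∀ i : ℕ, k + 1 ≤ i → 0 < p i ∧ p i < 1) :
    MonotoneOn (S0 pi p k) (Set.Ioc 0 1) ∧
      ((0 < ∑' j : ℕ, pi (k + 1 + j)) →
        StrictMonoOn (S0 pi p k) (Set.Ioc 0 1)) := by
  have hw0 : ∀ j, 0 < s0 p k j := fun j => Finset.prod_pos fun i hi => by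
    have := hp i (Finset.mem_Ico.1 hi).1
    linarith
  have hws : ∀ j, s0 p k (j + 1) < s0 p k j := fun j => by
    have h1 : s0 p k (j + 1) = s0 p k j * (1 - p (k + j + 1)) := by
      unfold s0
      rw [← add_assoc, Finset.prod_Ico_succ_top (by omega)]
    have := hp (k + j + 1) (by omega)
    rw [h1]
    nlinarith [hw0 j]
  have hwa : StrictAnti (s0 p k) := strictAnti_nat_of_succ_lt hws
  have hw1 : s0 p k 0 = 1 := by simp [s0]
  have hwle : ∀ j, s0 p k j ≤ 1 := fun j => hw1 ▸ hwa.antitone (Nat.zero_le j)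
  obtain ⟨a, hadef⟩ : ∃ a : ℕ → ℝ, a = fun j => pi (k + j) * ((k + j).choose k : ℝ) := ⟨_, rfl⟩
  have ha : ∀ j, 0 ≤ a j := fun j => by
    rw [hadef]; exact mul_nonneg (hpi0 _) (Nat.cast_nonneg _)
  have ha0 : 0 < a 0 := by rw [hadef]; simpa using hpik
  have hple : ∀ n, pi n ≤ 1 := fun n => le_hasSum hpi1 n fun j _ => hpi0 j
  have hS : ∀ t, S0 pi p k t = (∑' j, a j * (1 - t) ^ j * s0 p k j) /
      (∑' j, a j * (1 - t) ^ j) := fun t => by rw [hadef]; rfl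
  have hsum : ∀ x : ℝ, 0 ≤ x → x < 1 → Summable fun j => a j * x ^ j := fun x h0 h1 => by
    refine Summable.of_nonneg_of_le (fun j => mul_nonneg (ha j) (pow_nonneg h0 j)) (fun j => ?_)
      (summable_choose_mul_geometric_of_norm_lt_one k (r := x)
        (by rwa [Real.norm_of_nonneg h0]))
    rw [hadef, add_comm j k]
    refine mul_le_mul_of_nonneg_right ?_ (pow_nonneg h0 j)
    exact mul_le_of_le_one_left (Nat.cast_nonneg _) (hple _)
  have hsumw : ∀ x : ℝ, 0 ≤ x → x < 1 → Summable fun j => a j * x ^ j * s0 p k j :=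
    fun x h0 h1 => Summable.of_nonneg_of_le
      (fun j => mul_nonneg (mul_nonneg (ha j) (pow_nonneg h0 j)) (hw0 j).le)
      (fun j => mul_le_of_le_one_right (mul_nonneg (ha j) (pow_nonneg h0 j)) (hwle j))
      (hsum x h0 h1)
  have hpos : ∀ x : ℝ, 0 ≤ x → x < 1 → 0 < ∑' j, a j * x ^ j := fun x h0 h1 =>
    (hsum x h0 h1).tsum_pos (fun j => mul_nonneg (ha j) (pow_nonneg h0 j)) 0 (by simpa using ha0)
  constructor
  · intro t ht u hu htu
    have hx0 : 0 ≤ 1 - t := by linarith [ht.2]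
    have hx1 : 1 - t < 1 := by linarith [ht.1]
    have hy0 : 0 ≤ 1 - u := by linarith [hu.2]
    have hy1 : 1 - u < 1 := by linarith [hu.1]
    have H := aux_hasSum (hsum _ hx0 hx1) (hsum _ hy0 hy1) (hsumw _ hx0 hx1) (hsumw _ hy0 hy1)
    have := hasSum_le (aux_term ha hwa.antitone hy0 (by linarith : 1 - u ≤ 1 - t)) H hasSum_zero
    rw [hS, hS, div_le_div_iff₀ (hpos _ hx0 hx1) (hpos _ hy0 hy1)]
    linarith
  · intro hpp t ht u hu htu
    obtain ⟨m, hm⟩ : ∃ m, 0 < pi (k + 1 + m) := by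
      by_contra hcon
      push Not at hcon
      exact absurd (tsum_nonpos hcon) (not_le.2 hpp)
    have ham : 0 < a (m + 1) := by
      rw [hadef]
      refine mul_pos ?_ (Nat.cast_pos.2 (Nat.choose_pos (by omega)))
      rwa [show k + (m + 1) = k + 1 + m by ring]
    have hx0 : 0 ≤ 1 - t := by linarith [ht.2]
    have hx1 : 1 - t < 1 := by linarith [ht.1]
    have hy0 : 0 ≤ 1 - u := by linarith [hu.2]
    have hy1 : 1 - u < 1 := by linarith [hu.1]
    have H := aux_hasSum (hsum _ hx0 hx1) (hsum _ hy0 hy1) (hsumw _ hx0 hx1) (hsumw _ hy0 hy1)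
    have := hasSum_lt (i := ((0 : ℕ), m + 1))
      (aux_term ha hwa.antitone hy0 (by linarith : 1 - u ≤ 1 - t)) (by
        refine mul_neg_of_pos_of_neg (mul_pos ha0 ham) (mul_neg_of_neg_of_pos ?_ ?_)
        · have := pow_lt_pow_left₀ (by linarith : 1 - u < 1 - t) hy0 (Nat.succ_ne_zero m)
          simpa using this
        · exact sub_pos.2 (hwa (Nat.succ_pos m))) H hasSum_zero
    rw [hS, hS, div_lt_div_iff₀ (hpos _ hx0 hx1) (hpos _ hy0 hy1)]
    linarith
end

section
/- Fix an integer k ≥ 1, a probability mass function π on the nonnegative integers with π_k > 0, and real numbers p_i with 0 < p_i < 1 for all i ≥ k+1. Set s_0(k+1,k+j) = ∏_{i=k+1}^{k+j} (1−p_i) and s_1(k+1,k+j) = s_0(k+1,k+j) · ∑_{i=k+1}^{k+j} p_i/(1−p_i), and for t ∈ (0,1] define S_0(t,k) = (∑_{j≥0} π_{k+j} C(k+j,k)(1−t)^j s_0(k+1,k+j)) / (∑_{j≥0} π_{k+j} C(k+j,k)(1−t)^j) and S_1(t,k) = (∑_{j≥1} π_{k+j} C(k+j,k)(1−t)^j s_1(k+1,k+j))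 / (∑_{j≥0} π_{k+j} C(k+j,k)(1−t)^j). Then there exists a_k ∈ [0,1) such that for all t ∈ (0,1], sgn(S_0(t,k) − S_1(t,k)) = sgn(t − a_k). -/
/-- `s₁(k+1, k+j)`: the probability of exactly one success among trials `k+1, …, k+j`.
Note `s₁(k+1, k) = 0`, so the `j = 0` term vanishes. -/
noncomputable def s1 (p : ℕ → ℝ) (k j : ℕ) : ℝ :=
  s0 p k j * ∑ i ∈ Finset.Ico (k + 1) (k + j + 1), p i / (1 - p i)

/-- `S₁(t,k)`: conditional probability of exactly one success after time `t` given
`k` trials on `[0,t]` (the `j = 0` summand is zero since `s₁(k+1,k) = 0`). -/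
noncomputable def S1 (pi : ℕ → ℝ) (p : ℕ → ℝ) (k : ℕ) (t : ℝ) : ℝ :=
  (∑' j : ℕ, pi (k + j) * ((k + j).choose k : ℝ) * (1 - t) ^ j * s1 p k j) /
    (∑' j : ℕ, pi (k + j) * ((k + j).choose k : ℝ) * (1 - t) ^ j)

lemma aux_sum (d : ℕ → ℝ) (hs : ∀ x : ℝ, 0 ≤ x → x < 1 → Summable (fun j => |d j| * x ^ j))
    (x : ℝ) (h0 : 0 ≤ x) (h1 : x < 1) : Summable (fun j => d j * x ^ j) := by
  refine Summable.of_norm_bounded (hs x h0 h1) (fun j => ?_)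
  rw [Real.norm_eq_abs, abs_mul, abs_of_nonneg (pow_nonneg h0 j)]

lemma aux_main (d : ℕ → ℝ) (hd0 : 0 < d 0)
    (hs : ∀ x : ℝ, 0 ≤ x → x < 1 → Summable (fun j => |d j| * x ^ j))
    (hsg : (∀ j, 0 ≤ d j) ∨ ∃ m, 1 ≤ m ∧ (∀ j, j < m → 0 ≤ d j) ∧ ∀ j, m ≤ j → d j ≤ 0) :
    ∃ b : ℝ, 0 < b ∧ b ≤ 1 ∧ ∀ x : ℝ, 0 ≤ x → x < 1 →
      Real.sign (∑' j, d j * x ^ j) = Real.sign (b - x) := by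
  have hS := aux_sum d hs
  by_cases hall : ∀ x : ℝ, 0 ≤ x → x < 1 → 0 < ∑' j, d j * x ^ j
  · refine ⟨1, one_pos, le_rfl, fun x h0 h1 => ?_⟩
    rw [Real.sign_of_pos (hall x h0 h1), Real.sign_of_pos (by linarith)]
  push Not at hall
  obtain ⟨z, hz0, hz1, hz⟩ := hall
  have f0 : (∑' j, d j * (0:ℝ) ^ j) = d 0 := by
    rw [tsum_eq_single 0]
    · simp
    · intro j hj; simp [hj]
  rcases hsg with hpos | ⟨m, hm, hm1, hm2⟩
  · exfalso
    have := (hS z hz0 hz1).le_tsum 0 (fun j _ => mul_nonneg (hpos j) (pow_nonneg hz0 j))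
    simp at this
    linarith
  have key : ∀ x y : ℝ, 0 ≤ x → x < y → y < 1 → (∑' j, d j * x ^ j) ≤ 0 →
      (∑' j, d j * y ^ j) < 0 := by
    intro x y hx hxy hy hf
    have hx0 : 0 < x := by
      rcases hx.lt_or_eq with h | h
      · exact h
      · rw [← h, f0] at hf; linarith
    have hr : 1 < y / x := by rwa [one_lt_div hx0]
    have e : ∀ j, d j * y ^ j = d j * x ^ j * (y / x) ^ j := by
      intro j
      rw [div_pow]; field_simp
    calc (∑' j, d j * y ^ j) < ∑' j, d j * x ^ j * (y / x) ^ m := by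
          refine Summable.tsum_lt_tsum (i := 0) (fun j => ?_) ?_
            (hS y (by linarith) hy) ((hS x hx (by linarith)).mul_right _)
          · rw [e]
            rcases lt_or_ge j m with h | h
            · exact mul_le_mul_of_nonneg_left (pow_le_pow_right₀ hr.le h.le)
                (mul_nonneg (hm1 j h) (by positivity))
            · exact mul_le_mul_of_nonpos_left (pow_le_pow_right₀ hr.le h)
                (mul_nonpos_of_nonpos_of_nonneg (hm2 j h) (by positivity))
          · have := one_lt_pow₀ hr (by omega : m ≠ 0)
            simp only [pow_zero, mul_one]
            nlinarith
      _ = (∑' j, d j * x ^ j) * (y / x) ^ m := tsum_mul_right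
      _ ≤ 0 := mul_nonpos_of_nonpos_of_nonneg hf (by positivity)
  have hc : ContinuousOn (fun x : ℝ => ∑' j, d j * x ^ j) (Set.Icc 0 z) := by
    refine continuousOn_tsum (fun j => by fun_prop) (hs z hz0 hz1) (fun j x hx => ?_)
    rw [Real.norm_eq_abs, abs_mul, abs_of_nonneg (pow_nonneg hx.1 j)]
    exact mul_le_mul_of_nonneg_left (pow_le_pow_left₀ hx.1 hx.2 j) (abs_nonneg _)
  obtain ⟨b, ⟨hb0, hbz⟩, hb⟩ := intermediate_value_Icc' hz0 hc
    (show (0:ℝ) ∈ Set.Icc _ _ from ⟨hz, by simp only [f0]; exact hd0.le⟩)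
  simp only at hb
  have hb0' : 0 < b := by
    rcases hb0.lt_or_eq with h | h
    · exact h
    · rw [← h, f0] at hb; linarith
  refine ⟨b, hb0', by linarith, fun x h0 h1 => ?_⟩
  rcases lt_trichotomy x b with h | h | h
  · have : 0 < ∑' j, d j * x ^ j := by
      by_contra hn
      have := key x b h0 h (by linarith) (not_lt.mp hn)
      linarith
    rw [Real.sign_of_pos this, Real.sign_of_pos (by linarith)]
  · rw [h, hb, sub_self]
  · rw [Real.sign_of_neg (key b x hb0 h h1 hb.le), Real.sign_of_neg (by linarith)]

lemma aux_s (k : ℕ) (p : ℕ → ℝ) (hp : ∀ i : ℕ, k + 1 ≤ i → 0 < p i ∧ p i < 1) (j : ℕ) :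
    0 < s0 p k j ∧ 0 ≤ s1 p k j ∧ s0 p k j + s1 p k j ≤ 1 := by
  induction j with
  | zero => simp [s0, s1]
  | succ j ih =>
    obtain ⟨h1, h2, h3⟩ := ih
    obtain ⟨q0, q1⟩ := hp (k + j + 1) (by omega)
    have e0 : s0 p k (j + 1) = s0 p k j * (1 - p (k + j + 1)) := by
      unfold s0
      rw [← add_assoc, Finset.prod_Ico_succ_top (by omega)]
    have e1 : s1 p k (j + 1) = s1 p k j * (1 - p (k + j + 1)) + s0 p k j * p (k + j + 1) := by
      unfold s1
      rw [e0, ← add_assoc, Finset.sum_Ico_succ_top (by omega)]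
      have : 1 - p (k + j + 1) ≠ 0 := by linarith
      field_simp
    have r : 0 < 1 - p (k + j + 1) := by linarith
    rw [e0, e1]
    refine ⟨by positivity, by positivity, ?_⟩
    nlinarith [mul_nonneg h2 q0.le]


/-- There is a cutoff `a_k ∈ [0,1)` such that
`sgn(S₀(t,k) − S₁(t,k)) = sgn(t − a_k)` for all `t ∈ (0,1]`. -/
theorem stmt4 (k : ℕ) (hk : 1 ≤ k) (pi : ℕ → ℝ)
    (hpi0 : ∀ n, 0 ≤ pi n) (hpi1 : HasSum pi 1) (hpik : 0 < pi k)
    (p : ℕ → ℝ) (hp : ∀ i : ℕ, k + 1 ≤ i → 0 < p i ∧ p i < 1) :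
    ∃ a ∈ Set.Ico (0 : ℝ) 1, ∀ t ∈ Set.Ioc (0 : ℝ) 1,
      Real.sign (S0 pi p k t - S1 pi p k t) = Real.sign (t - a) := by
  have hs := aux_s k p hp
  have hpile : ∀ n, pi n ≤ 1 := fun n => by
    rw [← hpi1.tsum_eq]
    exact hpi1.summable.le_tsum n (fun j _ => hpi0 j)
  have hG : ∀ w : ℕ → ℝ, (∀ j, |w j| ≤ 1) → ∀ x : ℝ, 0 ≤ x → x < 1 →
      Summable (fun j => |pi (k + j) * ((k + j).choose k : ℝ) * w j| * x ^ j) := by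
    intro w hw x h0 h1
    have := summable_choose_mul_geometric_of_norm_lt_one (R := ℝ) k (r := x)
      (by rwa [Real.norm_eq_abs, abs_of_nonneg h0])
    refine Summable.of_nonneg_of_le (fun j => by positivity) (fun j => ?_) this
    refine mul_le_mul_of_nonneg_right ?_ (by positivity)
    rw [abs_mul, abs_mul, abs_of_nonneg (hpi0 _), Nat.abs_cast, add_comm j k]
    have h2 : (0:ℝ) ≤ ((k + j).choose k : ℝ) := by positivity
    calc pi (k + j) * ((k + j).choose k : ℝ) * |w j|
        ≤ 1 * ((k + j).choose k : ℝ) * 1 := by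
          gcongr
          · exact hpile _
          · exact hw j
      _ = _ := by ring
  have hG' : ∀ w : ℕ → ℝ, (∀ j, |w j| ≤ 1) → ∀ x : ℝ, 0 ≤ x → x < 1 →
      Summable (fun j => pi (k + j) * ((k + j).choose k : ℝ) * x ^ j * w j) := by
    intro w hw x h0 h1
    refine (aux_sum _ (hG w hw) x h0 h1).congr (fun j => by ring)
  have hw0 : ∀ j, |s0 p k j| ≤ 1 := fun j => by
    obtain ⟨a, b, c⟩ := hs j
    rw [abs_le]; constructor <;> linarith
  have hw1 : ∀ j, |s1 p k j| ≤ 1 := fun j => by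
    obtain ⟨a, b, c⟩ := hs j
    rw [abs_le]; constructor <;> linarith
  have hwd : ∀ j, |s0 p k j - s1 p k j| ≤ 1 := fun j => by
    obtain ⟨a, b, c⟩ := hs j
    rw [abs_le]; constructor <;> linarith
  have hR : ∀ j, s0 p k j - s1 p k j =
      s0 p k j * (1 - ∑ i ∈ Finset.Ico (k + 1) (k + j + 1), p i / (1 - p i)) := by
    intro j; unfold s1; ring
  have hmono : ∀ i j, i ≤ j → s0 p k i - s1 p k i ≤ 0 → s0 p k j - s1 p k j ≤ 0 := by
    intro i j hij h
    rw [hR] at h ⊢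
    have h1 := nonpos_of_mul_nonpos_right h (hs i).1
    refine mul_nonpos_of_nonneg_of_nonpos (hs j).1.le (le_trans ?_ h1)
    refine sub_le_sub_left (Finset.sum_le_sum_of_subset_of_nonneg
      (Finset.Ico_subset_Ico_right (by omega)) (fun l hl _ => ?_)) _
    have := hp l (Finset.mem_Ico.mp hl).1
    exact div_nonneg this.1.le (by linarith)
  have hcn : ∀ j, 0 ≤ pi (k + j) * ((k + j).choose k : ℝ) := fun j =>
    mul_nonneg (hpi0 _) (by positivity)
  obtain ⟨b, hb0, hb1, hb⟩ := aux_main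
    (fun j => pi (k + j) * ((k + j).choose k : ℝ) * (s0 p k j - s1 p k j))
    (by simpa [s0, s1] using hpik) (hG _ hwd) (by
      by_cases h : ∃ j, s0 p k j - s1 p k j ≤ 0
      · right
        classical
        refine ⟨Nat.find h, ?_, fun j hj => ?_, fun j hj => ?_⟩
        · rw [Nat.one_le_iff_ne_zero]
          intro h0
          have := Nat.find_spec h
          rw [h0] at this
          norm_num [s0, s1] at this
        · exact mul_nonneg (hcn j) (not_le.mp (Nat.find_min h hj)).le
        · exact mul_nonpos_of_nonneg_of_nonpos (hcn j) (hmono _ j hj (Nat.find_spec h))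
      · left
        push Not at h
        exact fun j => mul_nonneg (hcn j) (h j).le)
  refine ⟨1 - b, ⟨by linarith, by linarith⟩, fun t ht => ?_⟩
  obtain ⟨ht0, ht1⟩ := ht
  have x0 : 0 ≤ 1 - t := by linarith
  have x1 : 1 - t < 1 := by linarith
  have hD : 0 < ∑' j : ℕ, pi (k + j) * ((k + j).choose k : ℝ) * (1 - t) ^ j := by
    have hsum : Summable (fun j => pi (k + j) * ((k + j).choose k : ℝ) * (1 - t) ^ j) := by
      simpa using hG' (fun _ => 1) (by simp) _ x0 x1
    have := hsum.le_tsum 0 (fun j _ => mul_nonneg (hcn j) (pow_nonneg x0 j))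
    simp at this
    linarith
  have e := hb (1 - t) x0 x1
  rw [show b - (1 - t) = t - (1 - b) by ring] at e
  rw [← e]
  unfold S0 S1
  rw [← sub_div, ← (hG' _ hw0 _ x0 x1).tsum_sub (hG' _ hw1 _ x0 x1)]
  rw [show (∑' j, (pi (k + j) * ((k + j).choose k : ℝ) * (1 - t) ^ j * s0 p k j -
      pi (k + j) * ((k + j).choose k : ℝ) * (1 - t) ^ j * s1 p k j)) =
    ∑' j, pi (k + j) * ((k + j).choose k : ℝ) * (s0 p k j - s1 p k j) * (1 - t) ^ j from
    tsum_congr (fun j => by ring)]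
  generalize (∑' j, pi (k + j) * ((k + j).choose k : ℝ) * (s0 p k j - s1 p k j) * (1 - t) ^ j) = F
  rcases lt_trichotomy F 0 with h | h | h
  · rw [Real.sign_of_neg h, Real.sign_of_neg (div_neg_of_neg_of_pos h hD)]
  · rw [h, zero_div]
  · rw [Real.sign_of_pos h, Real.sign_of_pos (div_pos h hD)]
end

section
/- Let θ > 0, ν > 0 and x ∈ (0,1). If ν > θ, then the sequence k ↦ (1−x)^θ F(θ, θ−ν, k+θ, x) is strictly increasing in the integer k ≥ 1; if ν < θ, it is strictly decreasing in k. -/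
/-- The rising factorial (Pochhammer symbol): `(y)_j = y(y+1)⋯(y+j-1)`, `(y)_0 = 1`. -/
noncomputable def risingFactorial (y : ℝ) : ℕ → ℝ
  | 0 => 1
  | m + 1 => risingFactorial y m * (y + m)

/-- The Gaussian hypergeometric function
`F(a,b,c,x) = ∑_{j≥0} (a)_j (b)_j / ((c)_j j!) xʲ`. -/
noncomputable def hypF (a b c x : ℝ) : ℝ :=
  ∑' j : ℕ, risingFactorial a j * risingFactorial b j /
    (risingFactorial c j * (Nat.factorial j : ℝ)) * x ^ j

lemma rf_shift (y : ℝ) (j : ℕ) : risingFactorial y (j+1) = y * risingFactorial (y+1) j := by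
  induction j with
  | zero => simp [risingFactorial]
  | succ n ih =>
    rw [risingFactorial, ih, risingFactorial]; push_cast; ring

lemma rf_pos (y : ℝ) (hy : 0 < y) (j : ℕ) : 0 < risingFactorial y j := by
  induction j with
  | zero => simp [risingFactorial]
  | succ n ih => rw [risingFactorial]; positivity

noncomputable def hypT (a b c x : ℝ) (j : ℕ) : ℝ :=
  risingFactorial a j * risingFactorial b j /
    (risingFactorial c j * (Nat.factorial j : ℝ)) * x ^ j

lemma hypT_zero (a b c x : ℝ) : hypT a b c x 0 = 1 := by simp [hypT, risingFactorial]

lemma hypT_succ (a b c x : ℝ) (hc : 0 < c) (j : ℕ) :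
    hypT a b c x (j+1) = ((a + j) * (b + j) / ((c + j) * (j + 1)) * x) * hypT a b c x j := by
  have h1 := (rf_pos c hc j).ne'
  have h2 : (c + j) ≠ 0 := by positivity
  have h3 : (j : ℝ) + 1 ≠ 0 := by positivity
  have h4 : (j.factorial : ℝ) ≠ 0 := by positivity
  simp only [hypT, risingFactorial, Nat.factorial_succ, pow_succ]
  push_cast
  field_simp

lemma lim_aux (a c : ℝ) : Filter.Tendsto (fun j : ℕ => (a + j) / (c + j)) Filter.atTop (nhds 1) := by
  have := tendsto_add_mul_div_add_mul_atTop_nhds a c (1:ℝ) (d := 1) one_ne_zero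
  simpa using this

lemma hypT_summable (a b c x : ℝ) (hc : 0 < c) (hx : x ∈ Set.Ioo (0 : ℝ) 1) :
    Summable (hypT a b c x) := by
  obtain ⟨hx0, hx1⟩ := hx
  have hl : Filter.Tendsto (fun j : ℕ => ‖(a + j) * (b + j) / ((c + j) * (j + 1)) * x‖)
      Filter.atTop (nhds x) := by
    have h := (((lim_aux a c).mul (lim_aux b 1)).mul_const x).norm
    rw [one_mul, one_mul, Real.norm_of_nonneg hx0.le] at h
    refine h.congr fun j => ?_
    rw [div_mul_div_comm, add_comm (1:ℝ) j]
  obtain ⟨r, hr, hr1⟩ := exists_between hx1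
  refine summable_of_ratio_norm_eventually_le hr1 ?_
  filter_upwards [hl.eventually_lt_const hr] with j hj
  rw [hypT_succ a b c x hc, norm_mul]
  gcongr

lemma hypF_eq (a b c x : ℝ) (hc : 0 < c) (hx : x ∈ Set.Ioo (0 : ℝ) 1) :
    hypF a b c x = 1 + ∑' j, hypT a b c x (j+1) := by
  rw [← hypT_zero a b c x, ← (hypT_summable a b c x hc hx).tsum_eq_zero_add]; rfl

lemma step_b (a b c x : ℝ) (hc : 0 < c) (hx : x ∈ Set.Ioo (0 : ℝ) 1) :
    c * hypF a (b-1) c x = (c - a) * hypF a b (c+1) x + (1 - x) * a * hypF (a+1) b (c+1) x := by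
  have hc1 : 0 < c + 1 := by linarith
  have key : ∀ j, c * hypT a (b-1) c x (j+1) = (c-a) * hypT a b (c+1) x (j+1)
      + a * hypT (a+1) b (c+1) x (j+1) - x * a * hypT (a+1) b (c+1) x j := by
    intro j
    have h1 := (rf_pos (c+1) hc1 j).ne'
    have h2 : (c + 1 + j) ≠ 0 := by positivity
    have h3 : (j : ℝ) + 1 ≠ 0 := by positivity
    have h4 : (j.factorial : ℝ) ≠ 0 := by positivity
    have e1 := rf_shift (b-1) j
    rw [sub_add_cancel] at e1
    simp only [hypT, e1, rf_shift a j, rf_shift c j, Nat.factorial_succ, pow_succ]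
    simp only [risingFactorial]
    push_cast
    field_simp
    ring
  have s1 := (summable_nat_add_iff 1).2 (hypT_summable a b (c+1) x hc1 hx)
  have s2 := (hypT_summable (a+1) b (c+1) x hc1 hx)
  have s3 := (summable_nat_add_iff 1).2 s2
  have e := congrArg tsum (funext key)
  rw [((s1.mul_left _).add (s3.mul_left _)).tsum_sub (s2.mul_left _),
    (s1.mul_left _).tsum_add (s3.mul_left _)] at e
  simp only [tsum_mul_left] at e
  have f : ∑' j, hypT (a+1) b (c+1) x j = hypF (a+1) b (c+1) x := rfl
  have g := hypF_eq (a+1) b (c+1) x hc1 hx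
  rw [f] at e
  rw [hypF_eq a (b-1) c x hc hx, hypF_eq a b (c+1) x hc1 hx]
  linear_combination e - a * g

lemma step_c (a b c x : ℝ) (hc : 0 < c) (hx : x ∈ Set.Ioo (0 : ℝ) 1) :
    hypF a b (c+1) x - hypF a b c x = -(a * b * x / (c * (c+1))) * hypF (a+1) (b+1) (c+2) x := by
  have hc1 : 0 < c + 1 := by linarith
  have hc2 : 0 < c + 2 := by linarith
  have key : ∀ j, hypT a b (c+1) x (j+1) - hypT a b c x (j+1)
      = -(a * b * x / (c * (c+1))) * hypT (a+1) (b+1) (c+2) x j := by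
    intro j
    have h1 := (rf_pos (c+2) hc2 j).ne'
    have h2 : (c + 1 + j) ≠ 0 := by positivity
    have h3 : (j : ℝ) + 1 ≠ 0 := by positivity
    have h4 : (j.factorial : ℝ) ≠ 0 := by positivity
    have e1 := rf_shift (c+1) j
    rw [show c + 1 + 1 = c + 2 by ring] at e1
    have e2 : risingFactorial (c+1) j = (c+1) * risingFactorial (c+2) j / (c+1+j) := by
      rw [eq_div_iff h2, ← e1]; rfl
    simp only [hypT, e1, rf_shift a j, rf_shift b j, rf_shift c j, e2, Nat.factorial_succ, pow_succ]
    push_cast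
    field_simp
    ring
  have s1 := (summable_nat_add_iff 1).2 (hypT_summable a b (c+1) x hc1 hx)
  have s2 := (summable_nat_add_iff 1).2 (hypT_summable a b c x hc hx)
  have e := congrArg tsum (funext key)
  rw [s1.tsum_sub s2, tsum_mul_left] at e
  have f : ∑' j, hypT (a+1) (b+1) (c+2) x j = hypF (a+1) (b+1) (c+2) x := rfl
  rw [f] at e
  rw [hypF_eq a b c x hc hx, hypF_eq a b (c+1) x hc1 hx]
  linear_combination e

lemma hypF_pos_aux (x : ℝ) (hx : x ∈ Set.Ioo (0 : ℝ) 1) (n : ℕ) :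
    ∀ a b c : ℝ, 0 < a → a < c → 0 < b + n → 0 < hypF a b c x := by
  induction n with
  | zero =>
    intro a b c ha hac hb
    have hb : 0 < b := by simpa using hb
    have hc := ha.trans hac
    have hx0 := hx.1
    rw [hypF_eq a b c x hc hx]
    have : 0 ≤ ∑' j, hypT a b c x (j+1) := tsum_nonneg fun j => by
      have h1 := rf_pos a ha (j+1)
      have h2 := rf_pos b hb (j+1)
      have h3 := rf_pos c hc (j+1)
      unfold hypT; positivity
    linarith
  | succ n ih =>
    intro a b c ha hac hb
    have hc := ha.trans hac
    push_cast at hb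
    have h := step_b a (b+1) c x hc hx
    rw [add_sub_cancel_right] at h
    have p1 := ih a (b+1) (c+1) ha (by linarith) (by linarith)
    have p2 := ih (a+1) (b+1) (c+1) (by linarith) (by linarith) (by linarith)
    have q1 : 0 < c - a := by linarith
    have q2 : 0 < 1 - x := by linarith [hx.2]
    have : 0 < c * hypF a b c x := by rw [h]; positivity
    exact pos_of_mul_pos_right this hc.le

lemma hypF_pos (a b c x : ℝ) (ha : 0 < a) (hac : a < c) (hx : x ∈ Set.Ioo (0 : ℝ) 1) :
    0 < hypF a b c x := by
  obtain ⟨n, hn⟩ := exists_nat_gt (-b)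
  exact hypF_pos_aux x hx n a b c ha hac (by linarith)

/-- `W₀(x,k) = (1-x)^θ F(θ, θ-ν, k+θ, x)` is strictly increasing in the integer
`k ≥ 1` when `ν > θ`, and strictly decreasing in `k` when `ν < θ`. -/
theorem stmt7 (θ ν x : ℝ) (hθ : 0 < θ) (hν : 0 < ν) (hx : x ∈ Set.Ioo (0 : ℝ) 1) :
    (ν > θ → ∀ k l : ℕ, 1 ≤ k → k < l →
      (1 - x) ^ θ * hypF θ (θ - ν) ((k : ℝ) + θ) x <
        (1 - x) ^ θ * hypF θ (θ - ν) ((l : ℝ) + θ) x) ∧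
    (ν < θ → ∀ k l : ℕ, 1 ≤ k → k < l →
      (1 - x) ^ θ * hypF θ (θ - ν) ((l : ℝ) + θ) x <
        (1 - x) ^ θ * hypF θ (θ - ν) ((k : ℝ) + θ) x) := by
  have hx0 := hx.1
  have hp : 0 < (1 - x) ^ θ := Real.rpow_pos_of_pos (by linarith [hx.2]) _
  have st : ∀ k : ℕ, ∃ C > 0, hypF θ (θ - ν) (((k + 1 : ℕ) : ℝ) + θ) x
      - hypF θ (θ - ν) ((k : ℝ) + θ) x = (ν - θ) * C := by
    intro k
    have hc : 0 < (k : ℝ) + θ := by positivity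
    have h := step_c θ (θ - ν) ((k : ℝ) + θ) x hc hx
    have p := hypF_pos (θ+1) (θ - ν + 1) ((k : ℝ) + θ + 2) x (by linarith)
      (by have : (0:ℝ) ≤ k := k.cast_nonneg
          linarith) hx
    refine ⟨θ * x / (((k : ℝ) + θ) * ((k : ℝ) + θ + 1)) *
      hypF (θ+1) (θ - ν + 1) ((k : ℝ) + θ + 2) x, by positivity, ?_⟩
    rw [show (((k + 1 : ℕ) : ℝ) + θ) = (k : ℝ) + θ + 1 by push_cast; ring, h]
    ring
  constructor
  · intro h k l _ hkl
    refine mul_lt_mul_of_pos_left ?_ hp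
    refine strictMono_nat_of_lt_succ (f := fun k : ℕ => hypF θ (θ - ν) ((k : ℝ) + θ) x) ?_ hkl
    intro n
    obtain ⟨C, hC, e⟩ := st n
    have : 0 < (ν - θ) * C := mul_pos (by linarith) hC
    linarith
  · intro h k l _ hkl
    refine mul_lt_mul_of_pos_left ?_ hp
    refine strictAnti_nat_of_succ_lt (f := fun k : ℕ => hypF θ (θ - ν) ((k : ℝ) + θ) x) ?_ hkl
    intro n
    obtain ⟨C, hC, e⟩ := st n
    have : (ν - θ) * C < 0 := mul_neg_of_neg_of_pos (by linarith) hC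
    linarith
end

section
/- Let a_1, a_2, b, c be real numbers with c > b > 0, and let x ∈ (0,1). Then sgn(D_b (F(a_1,b,c,x) / F(a_2,b,c,x))) = sgn(a_1 − a_2), where D_b denotes the derivative with respect to the parameter b of the ratio of the two hypergeometric functions. -/
section
open MeasureTheory ProbabilityTheory Set

lemma rf_eq (a : ℝ) (n : ℕ) : risingFactorial a n = (ascPochhammer ℝ n).eval a := by
  induction n with
  | zero => simp [risingFactorial]
  | succ n ih => rw [risingFactorial, ih, ascPochhammer_succ_eval]

lemma rf_choose (a : ℝ) (n : ℕ) :
    Ring.choose (a + n - 1) n = risingFactorial a n / (n.factorial : ℝ) := by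
  have h := Ring.factorial_nsmul_multichoose_eq_ascPochhammer a n
  rw [Polynomial.ascPochhammer_smeval_eq_eval, ← rf_eq] at h
  have h2 : a + n - 1 - n + 1 = a := by ring
  rw [Ring.choose, h2, ← h, nsmul_eq_mul]
  have : (n.factorial : ℝ) ≠ 0 := by positivity
  field_simp

lemma rf_pos_s12 (a : ℝ) (ha : 0 < a) (n : ℕ) : 0 < risingFactorial a n := by
  induction n with
  | zero => simp [risingFactorial]
  | succ n ih => rw [risingFactorial]; positivity

lemma binom_hasSum (a y : ℝ) (hy : |y| < 1) :
    HasSum (fun n : ℕ => risingFactorial a n / (n.factorial : ℝ) * y ^ n) ((1 - y) ^ (-a)) := by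
  have h := (Real.one_div_one_sub_rpow_hasFPowerSeriesOnBall_zero a).hasSum (y := y)
    (by simpa [Metric.mem_eball, edist_dist, Real.dist_eq] using hy)
  have hp : (0 : ℝ) ≤ 1 - y := by linarith [(abs_lt.1 hy).2]
  simp only [FormalMultilinearSeries.ofScalars_apply_eq, zero_add, smul_eq_mul, rf_choose] at h
  rw [Real.rpow_neg hp, ← one_div]
  exact h

lemma beta_int (u v : ℝ) (hu : 0 < u) (hv : 0 < v) :
    IntegrableOn (fun t : ℝ => t ^ (u - 1) * (1 - t) ^ (v - 1)) (Ioo 0 1) ∧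
    ∫ t in Ioo (0:ℝ) 1, t ^ (u - 1) * (1 - t) ^ (v - 1) = beta u v := by
  have hc := Complex.betaIntegral_convergent (u := u) (v := v) (by simpa) (by simpa)
  rw [intervalIntegrable_iff_integrableOn_Ioo_of_le zero_le_one] at hc
  have key : ∀ t ∈ Ioo (0:ℝ) 1, ((t:ℂ) ^ ((u:ℂ) - 1) * (1 - (t:ℂ)) ^ ((v:ℂ) - 1)) =
      ((t ^ (u - 1) * (1 - t) ^ (v - 1) : ℝ) : ℂ) := by
    intro t ht
    push_cast
    rw [Complex.ofReal_cpow ht.1.le, Complex.ofReal_cpow (by linarith [ht.2])]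
    push_cast
    rfl
  constructor
  · have := (hc.congr_fun key measurableSet_Ioo).re
    simpa using! this
  · rw [beta_eq_betaIntegralReal u v hu hv, Complex.betaIntegral,
      intervalIntegral.integral_of_le zero_le_one, integral_Ioc_eq_integral_Ioo,
      setIntegral_congr_fun measurableSet_Ioo key, integral_complex_ofReal, Complex.ofReal_re]

lemma beta_rec (b d : ℝ) (hb : 0 < b) (hd : 0 < d) (n : ℕ) :
    beta (b + n) d = beta b d * (risingFactorial b n / risingFactorial (b + d) n) := by
  induction n with
  | zero => simp [risingFactorial]
  | succ n ih =>
    have h1 : beta (b + n + 1) d = beta (b + n) d * ((b + n) / (b + d + n)) := by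
      have e : b + n + 1 + d = (b + n + d) + 1 := by ring
      rw [beta, beta, e, Real.Gamma_add_one (by positivity), Real.Gamma_add_one (by positivity)]
      have := Real.Gamma_pos_of_pos (show 0 < b + n + d by positivity)
      have e : b + d + n = b + n + d := by ring
      rw [e]
      field_simp
    push_cast
    rw [← add_assoc, h1, ih, risingFactorial, risingFactorial]
    have := rf_pos_s12 (b + d) (by positivity) n
    field_simp

noncomputable def GG (a c x b t : ℝ) : ℝ := t ^ (b - 1) * (1 - t) ^ (c - b - 1) * (1 - x * t) ^ (-a)

lemma GG_int (a c x b : ℝ) (hb : 0 < b) (hbc : b < c) (hx : x ∈ Ioo (0:ℝ) 1) :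
    IntegrableOn (GG a c x b) (Ioo 0 1) := by
  unfold GG
  refine (beta_int b (c - b) hb (by linarith)).1.mul_continuousOn_of_subset (K := Icc 0 1) ?_
    measurableSet_Ioo isCompact_Icc Ioo_subset_Icc_self
  refine ContinuousOn.rpow_const (by fun_prop) ?_
  intro t ht
  left
  have : x * t ≤ x * 1 := mul_le_mul_of_nonneg_left ht.2 hx.1.le
  have := hx.2
  intro h
  linarith

lemma hypF_eq_s12 (a c x b : ℝ) (hb : 0 < b) (hbc : b < c) (hx : x ∈ Ioo (0:ℝ) 1) :
    hypF a b c x = (∫ t in Ioo (0:ℝ) 1, GG a c x b t) / beta b (c - b) := by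
  have hd : 0 < c - b := by linarith
  have hB := beta_pos hb hd
  rw [eq_div_iff hB.ne']
  let f : ℕ → ℝ → ℝ := fun n t => risingFactorial a n / (n.factorial : ℝ) * x ^ n *
    (t ^ (b + n - 1) * (1 - t) ^ (c - b - 1))
  have hfi : ∀ n, IntegrableOn (f n) (Ioo 0 1) := fun n =>
    (beta_int (b + n) (c - b) (by positivity) hd).1.const_mul _
  have hq : ∀ n, 0 < risingFactorial b n / risingFactorial c n := fun n =>
    div_pos (rf_pos_s12 b hb n) (rf_pos_s12 c (by linarith) n)
  have hval : ∀ n : ℕ, ∫ t in Ioo (0:ℝ) 1, (t ^ (b + n - 1) * (1 - t) ^ (c - b - 1)) =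
      beta b (c - b) * (risingFactorial b n / risingFactorial c n) := by
    intro n
    rw [(beta_int (b + n) (c - b) (by positivity) hd).2, beta_rec b (c - b) hb hd]
    simp
  have hle : ∀ n, beta b (c - b) * (risingFactorial b n / risingFactorial c n) ≤ beta b (c - b) := by
    intro n
    refine mul_le_of_le_one_right hB.le ?_
    rw [div_le_one (rf_pos_s12 c (by linarith) n)]
    induction n with
    | zero => simp [risingFactorial]
    | succ n ih =>
      rw [risingFactorial, risingFactorial]
      have := rf_pos_s12 c (by linarith) n
      have := rf_pos_s12 b hb n
      gcongr
  have hnorm : ∀ n, ∫ t in Ioo (0:ℝ) 1, ‖f n t‖ = |risingFactorial a n / (n.factorial : ℝ) * x ^ n| *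
      (beta b (c - b) * (risingFactorial b n / risingFactorial c n)) := by
    intro n
    rw [← hval, ← integral_const_mul]
    refine setIntegral_congr_fun measurableSet_Ioo ?_
    intro t ht
    have h1 := ht.1
    have h2 : 0 < 1 - t := by linarith [ht.2]
    simp only [f, norm_mul, Real.norm_eq_abs, abs_mul]
    rw [abs_of_nonneg (show 0 ≤ t ^ (b + n - 1) by positivity),
      abs_of_nonneg (show 0 ≤ (1 - t) ^ (c - b - 1) by positivity)]
  have hxa : |x| < 1 := by rw [abs_of_pos hx.1]; exact hx.2
  have hs : Summable fun n => ∫ t in Ioo (0:ℝ) 1, ‖f n t‖ := by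
    refine Summable.of_nonneg_of_le (fun n => integral_nonneg fun _ => norm_nonneg _) (fun n => ?_)
      ((binom_hasSum a x hxa).summable.abs.mul_right (beta b (c - b)))
    rw [hnorm]
    exact mul_le_mul_of_nonneg_left (hle n) (abs_nonneg _)
  have H := hasSum_integral_of_summable_integral_norm hfi hs
  have hsum : ∫ t in Ioo (0:ℝ) 1, GG a c x b t = ∫ t in Ioo (0:ℝ) 1, ∑' n, f n t := by
    refine setIntegral_congr_fun measurableSet_Ioo ?_
    intro t ht
    have hxt : |x * t| < 1 := by
      rw [abs_of_pos (mul_pos hx.1 ht.1)]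
      nlinarith [hx.1, hx.2, ht.1, ht.2]
    have h := (binom_hasSum a (x * t) hxt).mul_left (t ^ (b - 1) * (1 - t) ^ (c - b - 1))
    change GG a c x b t = _
    rw [GG, ← h.tsum_eq]
    refine tsum_congr fun n => ?_
    simp only [f]
    have : b + n - 1 = (b - 1) + n := by ring
    rw [this, Real.rpow_add ht.1, Real.rpow_natCast, mul_pow]
    ring
  rw [hsum, ← H.tsum_eq, hypF, ← tsum_mul_right]
  refine tsum_congr fun n => ?_
  simp only [f]
  rw [integral_const_mul, hval]
  have := rf_pos_s12 c (by linarith) n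
  have : (n.factorial : ℝ) ≠ 0 := by positivity
  field_simp

noncomputable def XX (t : ℝ) : ℝ := Real.log t - Real.log (1 - t)

lemma GG_pos (a c x b t : ℝ) (hx : x ∈ Ioo (0:ℝ) 1) (ht : t ∈ Ioo (0:ℝ) 1) : 0 < GG a c x b t := by
  have h1 := ht.1
  have h2 : 0 < 1 - t := by linarith [ht.2]
  have h3 : 0 < 1 - x * t := by nlinarith [hx.1, hx.2, ht.1, ht.2]
  unfold GG
  positivity

lemma GG_exp (a c x b t : ℝ) (ht : t ∈ Ioo (0:ℝ) 1) :
    GG a c x 0 t * Real.exp (b * XX t) = GG a c x b t := by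
  have h1 := ht.1
  have h2 : 0 < 1 - t := by linarith [ht.2]
  have e : Real.exp (b * XX t) = t ^ b * (1 - t) ^ (-b) := by
    rw [Real.rpow_def_of_pos h1, Real.rpow_def_of_pos h2, ← Real.exp_add, XX]
    ring_nf
  have e1 : b - 1 = (0 - 1) + b := by ring
  have e2 : c - b - 1 = (c - 0 - 1) + -b := by ring
  rw [e, GG, GG, e1, e2, Real.rpow_add h1, Real.rpow_add h2]
  ring

lemma GG_deriv (a c x b : ℝ) (hb : 0 < b) (hbc : b < c) (hx : x ∈ Ioo (0:ℝ) 1) :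
    IntegrableOn (fun t => XX t * GG a c x b t) (Ioo 0 1) ∧
    HasDerivAt (fun b' => ∫ t in Ioo (0:ℝ) 1, GG a c x b' t)
      (∫ t in Ioo (0:ℝ) 1, XX t * GG a c x b t) b := by
  set μ : Measure ℝ := (volume.restrict (Ioo 0 1)).withDensity
    (fun t => ENNReal.ofReal (GG a c x 0 t)) with hμ
  have hm : Measurable (fun t => ENNReal.ofReal (GG a c x 0 t)) := by
    unfold GG; fun_prop
  have hlt : ∀ᵐ t ∂(volume.restrict (Ioo (0:ℝ) 1)), ENNReal.ofReal (GG a c x 0 t) < ⊤ := by simp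
  have hsm : ∀ (g : ℝ → ℝ) (b' : ℝ), ∀ t ∈ Ioo (0:ℝ) 1,
      (ENNReal.ofReal (GG a c x 0 t)).toReal • (g t * Real.exp (b' * XX t)) =
        g t * GG a c x b' t := by
    intro g b' t ht
    rw [ENNReal.toReal_ofReal (GG_pos a c x 0 t hx ht).le, ← GG_exp a c x b' t ht, smul_eq_mul]
    ring
  have hI : ∀ (g : ℝ → ℝ) (b' : ℝ), ∫ t, g t * Real.exp (b' * XX t) ∂μ =
      ∫ t in Ioo (0:ℝ) 1, g t * GG a c x b' t := by
    intro g b'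
    rw [hμ, integral_withDensity_eq_integral_toReal_smul hm hlt]
    exact setIntegral_congr_fun measurableSet_Ioo (hsm g b')
  have hIn : ∀ (g : ℝ → ℝ) (b' : ℝ), Integrable (fun t => g t * Real.exp (b' * XX t)) μ ↔
      IntegrableOn (fun t => g t * GG a c x b' t) (Ioo 0 1) := by
    intro g b'
    rw [hμ, integrable_withDensity_iff_integrable_smul' hm hlt]
    exact integrableOn_congr_fun (hsm g b') measurableSet_Ioo
  have hint : b ∈ interior (integrableExpSet XX μ) := by
    rw [mem_interior]
    refine ⟨Ioo 0 c, ?_, isOpen_Ioo, hb, hbc⟩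
    intro b' hb'
    have := (hIn (fun _ => 1) b').2 (by simpa using GG_int a c x b' hb'.1 hb'.2 hx)
    simpa [integrableExpSet] using this
  constructor
  · rw [← hIn]
    simpa using integrable_pow_mul_exp_of_mem_interior_integrableExpSet hint 1
  · have h := hasDerivAt_mgf hint
    have e : mgf XX μ = fun b' => ∫ t in Ioo (0:ℝ) 1, GG a c x b' t := by
      ext b'
      have := hI (fun _ => 1) b'
      simpa [mgf] using this
    rw [e, hI XX b] at h
    exact h

lemma pos_int (f : ℝ → ℝ) (s : ℝ) (hf : IntegrableOn f (Ioo 0 1))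
    (h0 : ∀ t ∈ Ioo (0:ℝ) 1, t ≠ s → 0 < f t) : 0 < ∫ t in Ioo (0:ℝ) 1, f t := by
  have hae : ∀ᵐ t ∂(volume.restrict (Ioo (0:ℝ) 1)), 0 < f t := by
    have h1 : ∀ᵐ t ∂(volume.restrict (Ioo (0:ℝ) 1)), t ≠ s :=
      ae_restrict_of_ae (by simp [ae_iff])
    filter_upwards [h1, ae_restrict_mem measurableSet_Ioo] with t h1 h2 using h0 t h2 h1
  rw [integral_pos_iff_support_of_nonneg_ae (hae.mono fun t h => h.le) hf]
  have : Function.support f =ᵐ[volume.restrict (Ioo (0:ℝ) 1)] univ := by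
    filter_upwards [hae] with t ht
    exact propext ⟨fun _ => trivial, fun _ => ht.ne'⟩
  rw [measure_congr this]
  simp

lemma int_pos (a c x b : ℝ) (hb : 0 < b) (hbc : b < c) (hx : x ∈ Ioo (0:ℝ) 1) :
    0 < ∫ t in Ioo (0:ℝ) 1, GG a c x b t :=
  pos_int _ 0 (GG_int a c x b hb hbc hx) fun t ht _ => GG_pos a c x b t hx ht

lemma XX_lt {s t : ℝ} (hs : s ∈ Ioo (0:ℝ) 1) (ht : t ∈ Ioo (0:ℝ) 1) (h : s < t) : XX s < XX t := by
  have h1 := Real.log_lt_log hs.1 h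
  have h2 := Real.log_lt_log (show 0 < 1 - t by linarith [ht.2]) (show 1 - t < 1 - s by linarith)
  unfold XX
  linarith

lemma XX_surj (m : ℝ) : ∃ s ∈ Ioo (0:ℝ) 1, XX s = m := by
  have hp := Real.exp_pos m
  refine ⟨Real.exp m / (1 + Real.exp m), ⟨by positivity, ?_⟩, ?_⟩
  · rw [div_lt_one (by positivity)]; linarith
  · have e : 1 - Real.exp m / (1 + Real.exp m) = 1 / (1 + Real.exp m) := by field_simp; ring
    rw [XX, e, Real.log_div hp.ne' (by positivity), Real.log_div one_ne_zero (by positivity)]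
    simp

lemma num_pos (a₁ a₂ c x b : ℝ) (hb : 0 < b) (hbc : b < c) (hx : x ∈ Ioo (0:ℝ) 1) (ha : a₂ < a₁) :
    0 < (∫ t in Ioo (0:ℝ) 1, XX t * GG a₁ c x b t) * (∫ t in Ioo (0:ℝ) 1, GG a₂ c x b t) -
      (∫ t in Ioo (0:ℝ) 1, GG a₁ c x b t) * (∫ t in Ioo (0:ℝ) 1, XX t * GG a₂ c x b t) := by
  have hI1 := GG_int a₁ c x b hb hbc hx
  have hI2 := GG_int a₂ c x b hb hbc hx
  have hX1 := (GG_deriv a₁ c x b hb hbc hx).1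
  have hX2 := (GG_deriv a₂ c x b hb hbc hx).1
  have hp2 := int_pos a₂ c x b hb hbc hx
  obtain ⟨s, hs, hsm⟩ := XX_surj ((∫ t in Ioo (0:ℝ) 1, XX t * GG a₂ c x b t) /
    (∫ t in Ioo (0:ℝ) 1, GG a₂ c x b t))
  have hs3 : ∀ t ∈ Ioo (0:ℝ) 1, 0 < 1 - x * t := fun t ht => by
    nlinarith [hx.1, hx.2, ht.1, ht.2]
  set k : ℝ := (1 - x * s) ^ (-(a₁ - a₂)) with hk
  have hG : ∀ t ∈ Ioo (0:ℝ) 1, GG a₁ c x b t = GG a₂ c x b t * (1 - x * t) ^ (-(a₁ - a₂)) := by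
    intro t ht
    have e : -a₁ = -a₂ + -(a₁ - a₂) := by ring
    rw [GG, GG, e, Real.rpow_add (hs3 t ht)]
    ring
  have key := pos_int (fun t => (XX t * GG a₁ c x b t - XX s * GG a₁ c x b t) -
      k * (XX t * GG a₂ c x b t - XX s * GG a₂ c x b t)) s
    ((hX1.sub (hI1.const_mul _)).sub ((hX2.sub (hI2.const_mul _)).const_mul _)) (by
      intro t ht hts
      have e : (XX t * GG a₁ c x b t - XX s * GG a₁ c x b t) -
        k * (XX t * GG a₂ c x b t - XX s * GG a₂ c x b t) =
        GG a₂ c x b t * ((XX t - XX s) * ((1 - x * t) ^ (-(a₁ - a₂)) - k)) := by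
        rw [hG t ht]; ring
      change 0 < (XX t * GG a₁ c x b t - XX s * GG a₁ c x b t) -
        k * (XX t * GG a₂ c x b t - XX s * GG a₂ c x b t)
      rw [e]
      refine mul_pos (GG_pos a₂ c x b t hx ht) ?_
      rcases lt_or_gt_of_ne hts with h | h
      · refine mul_pos_of_neg_of_neg (sub_neg.2 (XX_lt ht hs h)) (sub_neg.2 ?_)
        exact Real.rpow_lt_rpow_of_neg (hs3 s hs) (by nlinarith [hx.1]) (by linarith)
      · refine mul_pos (sub_pos.2 (XX_lt hs ht h)) (sub_pos.2 ?_)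
        exact Real.rpow_lt_rpow_of_neg (hs3 t ht) (by nlinarith [hx.1]) (by linarith))
  have i1 : IntegrableOn (fun t => XX t * GG a₁ c x b t - XX s * GG a₁ c x b t) (Ioo 0 1) :=
    hX1.sub (hI1.const_mul _)
  have i2 : IntegrableOn (fun t => k * (XX t * GG a₂ c x b t - XX s * GG a₂ c x b t)) (Ioo 0 1) :=
    (hX2.sub (hI2.const_mul _)).const_mul _
  rw [integral_sub i1 i2,
    integral_const_mul, integral_sub hX1 (hI1.const_mul _), integral_sub hX2 (hI2.const_mul _),
    integral_const_mul, integral_const_mul, hsm] at key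
  have h := mul_pos key hp2
  have e : ∀ A B C D : ℝ, 0 < D → (A - C / D * B - k * (C - C / D * D)) * D = A * D - B * C := by
    intro A B C D hD
    field_simp
    ring
  rw [e _ _ _ _ hp2] at h
  exact h

lemma deriv_ratio (a₁ a₂ b c x : ℝ) (hb : 0 < b) (hbc : b < c) (hx : x ∈ Ioo (0:ℝ) 1) :
    deriv (fun b' : ℝ => hypF a₁ b' c x / hypF a₂ b' c x) b =
     ((∫ t in Ioo (0:ℝ) 1, XX t * GG a₁ c x b t) * (∫ t in Ioo (0:ℝ) 1, GG a₂ c x b t) -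
      (∫ t in Ioo (0:ℝ) 1, GG a₁ c x b t) * (∫ t in Ioo (0:ℝ) 1, XX t * GG a₂ c x b t)) /
      (∫ t in Ioo (0:ℝ) 1, GG a₂ c x b t) ^ 2 := by
  have hev : (fun b' : ℝ => hypF a₁ b' c x / hypF a₂ b' c x) =ᶠ[nhds b]
      fun b' => (∫ t in Ioo (0:ℝ) 1, GG a₁ c x b' t) / (∫ t in Ioo (0:ℝ) 1, GG a₂ c x b' t) := by
    filter_upwards [isOpen_Ioo.mem_nhds (show b ∈ Ioo 0 c from ⟨hb, hbc⟩)] with b' hb'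
    rw [hypF_eq_s12 a₁ c x b' hb'.1 hb'.2 hx, hypF_eq_s12 a₂ c x b' hb'.1 hb'.2 hx]
    exact div_div_div_cancel_right₀ (beta_pos hb'.1 (sub_pos.2 hb'.2)).ne' _ _
  rw [hev.deriv_eq]
  exact ((GG_deriv a₁ c x b hb hbc hx).2.div (GG_deriv a₂ c x b hb hbc hx).2
    (int_pos a₂ c x b hb hbc hx).ne').deriv

end

/-- For `c > b > 0` and `0 < x < 1`,
`sgn(D_b (F(a₁,b,c,x)/F(a₂,b,c,x))) = sgn(a₁ - a₂)`. -/
theorem stmt12 (a₁ a₂ b c x : ℝ) (hb : 0 < b) (hbc : b < c)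
    (hx : x ∈ Set.Ioo (0 : ℝ) 1) :
    Real.sign (deriv (fun b' : ℝ => hypF a₁ b' c x / hypF a₂ b' c x) b) =
      Real.sign (a₁ - a₂) := by
  rw [deriv_ratio a₁ a₂ b c x hb hbc hx]
  have hp := int_pos a₂ c x b hb hbc hx
  rcases lt_trichotomy a₁ a₂ with h | h | h
  · have hn := num_pos a₂ a₁ c x b hb hbc hx h
    rw [Real.sign_of_neg (sub_neg.2 h), Real.sign_of_neg]
    exact div_neg_of_neg_of_pos (by linarith) (by positivity)
  · subst h
    rw [sub_self, mul_comm, sub_self, zero_div]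
  · have hn := num_pos a₁ a₂ c x b hb hbc hx h
    rw [Real.sign_of_pos (sub_pos.2 h), Real.sign_of_pos]
    exact div_pos hn (by positivity)
end
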